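/- arXiv:math/0701593 — 2 statements merged into one kernel-verified Lean document; each statement's English description precedes it below -/
import Mathlib

section
/- For every δ > 0, ω > 0 and t₀ ∈ ℝ, the function t ↦ sin(ω(t + t₀))·x_h'(t) is integrable on ℝ and ∫_{−∞}^{∞} sin(ω(t + t₀))·x_h'(t) dt = (6πω²/δ)·cos(ω t₀)/sinh(πω/√δ). -/
open MeasureTheory

lemma hf_sig (u : ℝ) : Real.sigmoid u * (1 - Real.sigmoid u) = 1 / (2 * (1 + Real.cosh u)) := by
  rw [Real.sigmoid_def, Real.cosh_eq, Real.exp_neg]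
  have := Real.exp_pos u
  field_simp
  ring

lemma hf_deriv (a t : ℝ) :
    HasDerivAt (fun t => Real.sigmoid (a * t)) (a * (1 / (2 * (1 + Real.cosh (a * t))))) t := by
  have h := (Real.hasDerivAt_sigmoid (a * t)).comp t ((hasDerivAt_id t).const_mul a)
  rw [hf_sig] at h
  exact h.congr_deriv (by ring)

lemma hf_image {a : ℝ} (ha : 0 < a) :
    Set.image (fun t => Real.sigmoid (a * t)) Set.univ = Set.Ioo 0 1 := by
  rw [Set.image_univ, ← Real.range_sigmoid]
  ext y
  constructor
  · rintro ⟨t, rfl⟩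
    exact ⟨a * t, rfl⟩
  · rintro ⟨t, rfl⟩
    exact ⟨t / a, by simp only; congr 1; field_simp⟩

lemma hf_inj {a : ℝ} (ha : 0 < a) :
    Set.InjOn (fun t => Real.sigmoid (a * t)) Set.univ := by
  intro s _ t _ h
  exact mul_left_cancel₀ ha.ne' (Real.sigmoid_injective h)

lemma hf_integrable {a : ℝ} (ha : 0 < a) :
    Integrable (fun t : ℝ => 1 / (1 + Real.cosh (a * t))) := by
  have h := (integrableOn_image_iff_integrableOn_abs_deriv_smul MeasurableSet.univ
    (fun t _ => (hf_deriv a t).hasDerivWithinAt) (hf_inj ha) (fun _ => (1 : ℝ))).1 (by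
      rw [hf_image ha]
      exact integrableOn_const (by simp))
  rw [integrableOn_univ] at h
  refine (h.const_mul (2 / a)).congr (Filter.Eventually.of_forall fun t => ?_)
  have hc := Real.cosh_pos (a * t)
  have : 0 ≤ a * (1 / (2 * (1 + Real.cosh (a * t)))) := by positivity
  simp only [abs_of_nonneg this, smul_eq_mul]
  field_simp

lemma hf_cpow (u k : ℝ) :
    ((Real.sigmoid u : ℝ) : ℂ) ^ ((1 + k * Complex.I) - 1) *
      (1 - ((Real.sigmoid u : ℝ) : ℂ)) ^ ((1 - k * Complex.I) - 1) =
    Complex.exp ((k * u : ℝ) * Complex.I) := by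
  have h0 := Real.sigmoid_pos u
  have h1 : 0 < 1 - Real.sigmoid u := sub_pos.2 (Real.sigmoid_lt_one u)
  have e1 : (1 - ((Real.sigmoid u : ℝ) : ℂ)) = ((1 - Real.sigmoid u : ℝ) : ℂ) := by push_cast; rfl
  have hl : Real.log (1 - Real.sigmoid u) = Real.log (Real.sigmoid u) - u := by
    rw [← Real.sigmoid_neg, ← Real.sigmoid_mul_rexp_neg, Real.log_mul h0.ne' (Real.exp_pos _).ne',
      Real.log_exp]
    ring
  rw [e1, Complex.cpow_def_of_ne_zero (by exact_mod_cast h0.ne'),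
    Complex.cpow_def_of_ne_zero (by exact_mod_cast h1.ne'), ← Complex.ofReal_log h0.le,
    ← Complex.ofReal_log h1.le, hl, ← Complex.exp_add]
  congr 1
  push_cast
  ring

lemma hf_beta {k : ℝ} (hk : 0 < k) :
    Complex.betaIntegral (1 + k * Complex.I) (1 - k * Complex.I) =
      ((Real.pi * k / Real.sinh (Real.pi * k) : ℝ) : ℂ) := by
  have h := Complex.Gamma_mul_Gamma_eq_betaIntegral (s := 1 + k * Complex.I)
    (t := 1 - k * Complex.I) (by simp) (by simp)
  have hz : (k * Complex.I : ℂ) ≠ 0 := by simp [hk.ne']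
  have e : (1 + k * Complex.I : ℂ) + (1 - k * Complex.I) = 1 + 1 := by ring
  have hs : Real.sinh (Real.pi * k) ≠ 0 := by
    rw [Ne, Real.sinh_eq_zero]; positivity
  have hs' : Complex.sinh (Real.pi * k) ≠ 0 := by exact_mod_cast hs
  rw [e, Complex.Gamma_add_one 1 one_ne_zero, Complex.Gamma_one, one_mul, one_mul,
    add_comm 1 (k * Complex.I : ℂ), Complex.Gamma_add_one _ hz, mul_assoc,
    Complex.Gamma_mul_Gamma_one_sub, ← mul_assoc (Real.pi : ℂ), Complex.sin_mul_I] at h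
  rw [add_comm, ← h]
  push_cast
  field_simp

lemma hf_key {a ω : ℝ} (ha : 0 < a) (hω : 0 < ω) :
    ∫ t : ℝ, Complex.exp ((ω * t : ℝ) * Complex.I) * ((1 / (1 + Real.cosh (a * t)) : ℝ) : ℂ) =
      ((2 * Real.pi * ω / a ^ 2 / Real.sinh (Real.pi * ω / a) : ℝ) : ℂ) := by
  have hk : 0 < ω / a := by positivity
  have h := hf_beta hk
  rw [Complex.betaIntegral, intervalIntegral.integral_of_le zero_le_one,
    integral_Ioc_eq_integral_Ioo, ← hf_image ha,
    integral_image_eq_integral_abs_deriv_smul MeasurableSet.univ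
    (fun t _ => (hf_deriv a t).hasDerivWithinAt) (hf_inj ha), setIntegral_univ] at h
  have e : ∀ t : ℝ, Complex.exp ((ω * t : ℝ) * Complex.I) *
      ((1 / (1 + Real.cosh (a * t)) : ℝ) : ℂ) = ((2 / a : ℝ) : ℂ) *
      (|a * (1 / (2 * (1 + Real.cosh (a * t))))| •
        (((Real.sigmoid (a * t) : ℝ) : ℂ) ^ ((1 + (ω / a : ℝ) * Complex.I) - 1) *
      (1 - ((Real.sigmoid (a * t) : ℝ) : ℂ)) ^ ((1 - (ω / a : ℝ) * Complex.I) - 1))) := by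
    intro t
    have hc := Real.cosh_pos (a * t)
    have : 0 ≤ a * (1 / (2 * (1 + Real.cosh (a * t)))) := by positivity
    rw [hf_cpow, abs_of_nonneg this, Complex.real_smul, ← mul_assoc, ← Complex.ofReal_mul,
      mul_comm]
    congr 3
    · field_simp
    · congr 1
      field_simp
  simp_rw [e]
  rw [integral_const_mul, h, ← Complex.ofReal_mul]
  congr 1
  rw [← mul_div_assoc Real.pi]
  field_simp

lemma hf_cos {a ω : ℝ} (ha : 0 < a) (hω : 0 < ω) (t₀ : ℝ) :
    ∫ t : ℝ, Real.cos (ω * (t + t₀)) * (1 / (1 + Real.cosh (a * t))) =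
      Real.cos (ω * t₀) * (2 * Real.pi * ω / a ^ 2 / Real.sinh (Real.pi * ω / a)) := by
  have h := congrArg (fun z => Complex.exp ((ω * t₀ : ℝ) * Complex.I) * z) (hf_key ha hω)
  rw [← integral_const_mul] at h
  have hi : Integrable (fun t : ℝ => Complex.exp ((ω * t₀ : ℝ) * Complex.I) *
      (Complex.exp ((ω * t : ℝ) * Complex.I) * ((1 / (1 + Real.cosh (a * t)) : ℝ) : ℂ))) := by
    refine Integrable.const_mul ?_ _
    refine (hf_integrable ha).ofReal.bdd_mul (c := 1) ?_ ?_
    · exact Continuous.aestronglyMeasurable (by fun_prop)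
    · exact Filter.Eventually.of_forall fun t => by rw [Complex.norm_exp_ofReal_mul_I]
  have h2 := congrArg Complex.re h
  have h3 := integral_re hi
  simp only [RCLike.re_eq_complex_re] at h3
  rw [← h3, Complex.re_mul_ofReal, Complex.exp_ofReal_mul_I_re] at h2
  rw [← h2]
  congr 1
  ext t
  rw [← mul_assoc, ← Complex.exp_add, ← add_mul, ← Complex.ofReal_add, Complex.re_mul_ofReal,
    Complex.exp_ofReal_mul_I_re]
  congr 2
  ring

/-- For every δ > 0, ω > 0 and t₀ ∈ ℝ, `t ↦ sin(ω(t+t₀))·x_h'(t)`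
is integrable on ℝ and
`∫ sin(ω(t+t₀))·x_h'(t) dt = (6πω²/δ)·cos(ω t₀)/sinh(πω/√δ)`. -/
theorem helmholtz_forcing_integral (δ ω : ℝ) (hδ : 0 < δ) (hω : 0 < ω) (t₀ : ℝ)
    (x : ℝ → ℝ)
    (hx : ∀ t : ℝ, x t = 1 - 3 / (1 + Real.cosh (Real.sqrt δ * t))) :
    Integrable (fun t : ℝ => Real.sin (ω * (t + t₀)) * deriv x t) ∧
    ∫ t : ℝ, Real.sin (ω * (t + t₀)) * deriv x t =
      (6 * Real.pi * ω ^ 2 / δ) * (Real.cos (ω * t₀) / Real.sinh (Real.pi * ω / Real.sqrt δ)) := by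
  have ha : 0 < Real.sqrt δ := Real.sqrt_pos.2 hδ
  have hsq : Real.sqrt δ ^ 2 = δ := Real.sq_sqrt hδ.le
  generalize Real.sqrt δ = a at *
  subst hsq
  let D : ℝ → ℝ := fun t => 3 * a * Real.sinh (a * t) / (1 + Real.cosh (a * t)) ^ 2
  let v : ℝ → ℝ := fun t => (-3) * (1 / (1 + Real.cosh (a * t)))
  have hpos : ∀ t, 0 < 1 + Real.cosh (a * t) := fun t => by
    have := Real.cosh_pos (a * t); linarith
  have hv : ∀ t, HasDerivAt v (D t) t := by
    intro t
    have h1 : HasDerivAt (fun t => 1 + Real.cosh (a * t)) (Real.sinh (a * t) * (a * 1)) t :=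
      (((hasDerivAt_id t).const_mul a).cosh).const_add 1
    have h2 := (h1.inv (hpos t).ne').const_mul (-3)
    refine (h2.congr_deriv ?_).congr_of_eventuallyEq (Filter.Eventually.of_forall fun s => ?_)
    · simp only [D]; ring
    · simp [v]
  have hxv : x = fun t => 1 + v t := by
    ext t; rw [hx]; simp only [v]; ring
  have hd : deriv x = D := by
    ext t
    rw [hxv]
    exact ((hv t).const_add 1).deriv
  have hvi : Integrable v := (hf_integrable ha).const_mul _
  have hDi : Integrable D := by
    refine (hvi.norm.const_mul a).mono' (Continuous.aestronglyMeasurable ?_) ?_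
    · exact Continuous.div (by fun_prop) (by fun_prop) fun t => (pow_pos (hpos t) 2).ne'
    · refine Filter.Eventually.of_forall fun t => ?_
      have hp := hpos t
      have hs : |Real.sinh (a * t)| ≤ 1 + Real.cosh (a * t) := by
        rw [abs_le]
        have h1 := Real.cosh_add_sinh (a * t)
        have h2 := Real.cosh_sub_sinh (a * t)
        have h3 := Real.exp_pos (a * t)
        have h4 := Real.exp_pos (-(a * t))
        constructor <;> linarith
      simp only [D, v, Real.norm_eq_abs, abs_div, abs_mul, abs_pow, abs_of_pos hp, abs_of_pos ha,
        abs_neg, abs_one, Nat.abs_ofNat]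
      rw [div_le_iff₀ (by positivity)]
      calc 3 * a * |Real.sinh (a * t)| ≤ 3 * a * (1 + Real.cosh (a * t)) := by gcongr
        _ = _ := by field_simp
  have hsin : ∀ f : ℝ → ℝ, Integrable f → Integrable (fun t => Real.sin (ω * (t + t₀)) * f t) := by
    intro f hf
    refine hf.bdd_mul (c := 1) (Continuous.aestronglyMeasurable (by fun_prop)) ?_
    exact Filter.Eventually.of_forall fun t => Real.abs_sin_le_one _
  have hcos : Integrable (fun t => (Real.cos (ω * (t + t₀)) * ω) * v t) := by
    refine hvi.bdd_mul (c := ω) (Continuous.aestronglyMeasurable (by fun_prop)) ?_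
    refine Filter.Eventually.of_forall fun t => ?_
    rw [Real.norm_eq_abs, abs_mul, abs_of_pos hω]
    exact mul_le_of_le_one_left hω.le (Real.abs_cos_le_one _)
  have hu : ∀ t, HasDerivAt (fun t => Real.sin (ω * (t + t₀))) (Real.cos (ω * (t + t₀)) * ω) t := by
    intro t
    have := (((hasDerivAt_id t).add_const t₀).const_mul ω).sin
    simpa using this
  rw [hd]
  refine ⟨hsin D hDi, ?_⟩
  rw [integral_mul_deriv_eq_deriv_mul_of_integrable (fun t _ => hu t) (fun t _ => hv t)
    (hsin D hDi) hcos (hsin v hvi)]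
  have e : ∀ t, Real.cos (ω * (t + t₀)) * ω * v t =
      (-3 * ω) * (Real.cos (ω * (t + t₀)) * (1 / (1 + Real.cosh (a * t)))) := by
    intro t; simp only [v]; ring
  simp_rw [e]
  rw [integral_const_mul, hf_cos ha hω]
  ring
end

section
/- For every δ > 0, ω > 0 and t₀ ∈ ℝ, the function t ↦ sin(ω(t + t₀))·(x_h(t) − x_h(t)²)·x_h'(t) is integrable on ℝ and ∫_{−∞}^{∞} sin(ω(t + t₀))·(x_h(t) − x_h(t)²)·x_h'(t) dt = (3π/5)·ω²·(δ² − ω⁴)·cos(ω t₀)/(δ³·sinh(πω/√δ)). -/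
open MeasureTheory

/-- the logistic density -/
noncomputable def logd (s : ℝ) : ℝ := Real.sigmoid s * (1 - Real.sigmoid s)

lemma logd_eq (s : ℝ) : 6 * logd s = 3 / (1 + Real.cosh s) := by
  unfold logd
  rw [Real.sigmoid_def, Real.cosh_eq, Real.exp_neg]
  have h := Real.exp_pos s
  field_simp
  ring

lemma logd_pos (s : ℝ) : 0 < logd s :=
  mul_pos (Real.sigmoid_pos s) (by linarith [Real.sigmoid_lt_one s])

lemma logd_le (s : ℝ) : logd s ≤ 1 := by
  unfold logd
  nlinarith [Real.sigmoid_pos s, Real.sigmoid_lt_one s]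

lemma logd_cont : Continuous logd := by
  unfold logd
  have := continuous_sigmoid
  fun_prop

lemma logd_hasDerivAt (s : ℝ) :
    HasDerivAt logd (logd s * (1 - 2 * Real.sigmoid s)) s := by
  have h := Real.hasDerivAt_sigmoid s
  refine (h.mul (h.const_sub 1)).congr_deriv ?_
  unfold logd
  ring

lemma logd_cpow (n : ℕ) (a s : ℝ) :
    |Real.sigmoid s * (1 - Real.sigmoid s)| •
      (((Real.sigmoid s : ℝ) : ℂ) ^ ((n + a * Complex.I : ℂ) - 1) *
        (1 - ((Real.sigmoid s : ℝ) : ℂ)) ^ ((n - a * Complex.I : ℂ) - 1)) =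
    ((logd s ^ n : ℝ) : ℂ) * Complex.exp (a * s * Complex.I) := by
  have h0 := Real.sigmoid_pos s
  have h1 : 0 < 1 - Real.sigmoid s := by linarith [Real.sigmoid_lt_one s]
  have hlog : Real.sigmoid s = (1 - Real.sigmoid s) * Real.exp s := by
    rw [Real.sigmoid_def, Real.exp_neg]
    have h := Real.exp_pos s
    field_simp
    ring
  have hl : Real.log (Real.sigmoid s) = Real.log (1 - Real.sigmoid s) + s := by
    conv_lhs => rw [hlog]
    rw [Real.log_mul h1.ne' (Real.exp_pos s).ne', Real.log_exp]
  have hx : ((Real.sigmoid s : ℝ) : ℂ) ≠ 0 := by exact_mod_cast h0.ne'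
  have hy : (((1 - Real.sigmoid s : ℝ)) : ℂ) ≠ 0 := by exact_mod_cast h1.ne'
  have hc : (1 : ℂ) - ((Real.sigmoid s : ℝ) : ℂ) = ((1 - Real.sigmoid s : ℝ) : ℂ) := by
    push_cast; rfl
  rw [abs_of_pos (mul_pos h0 h1), hc, Complex.cpow_sub _ _ hx, Complex.cpow_sub _ _ hy,
    Complex.cpow_one, Complex.cpow_one, Complex.cpow_add _ _ hx, Complex.cpow_sub _ _ hy,
    Complex.cpow_natCast, Complex.cpow_natCast, Complex.cpow_def_of_ne_zero hx,
    Complex.cpow_def_of_ne_zero hy, ← Complex.ofReal_log h0.le, ← Complex.ofReal_log h1.le, hl]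
  have he : Complex.exp (((Real.log (1 - Real.sigmoid s) + s : ℝ) : ℂ) * (a * Complex.I)) =
      Complex.exp (((Real.log (1 - Real.sigmoid s) : ℝ) : ℂ) * (a * Complex.I)) *
        Complex.exp (a * s * Complex.I) := by
    rw [← Complex.exp_add]
    congr 1
    push_cast
    ring
  rw [he, Complex.real_smul]
  have hE := Complex.exp_ne_zero (((Real.log (1 - Real.sigmoid s) : ℝ) : ℂ) * (a * Complex.I))
  unfold logd
  push_cast at hy ⊢
  field_simp
  rw [mul_pow]

lemma logd_integral (n : ℕ) (hn : 0 < n) (a : ℝ) :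
    Integrable (fun s : ℝ => ((logd s ^ n : ℝ) : ℂ) * Complex.exp (a * s * Complex.I)) ∧
    ∫ s : ℝ, ((logd s ^ n : ℝ) : ℂ) * Complex.exp (a * s * Complex.I) =
      Complex.betaIntegral (n + a * Complex.I) (n - a * Complex.I) := by
  have hd : ∀ s ∈ (Set.univ : Set ℝ), HasDerivWithinAt Real.sigmoid
      (Real.sigmoid s * (1 - Real.sigmoid s)) Set.univ s :=
    fun s _ => (Real.hasDerivAt_sigmoid s).hasDerivWithinAt
  have hi : Set.InjOn Real.sigmoid Set.univ := Real.sigmoid_injective.injOn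
  have hn' : (0 : ℝ) < n := by exact_mod_cast hn
  have hb := Complex.betaIntegral_convergent (u := n + a * Complex.I) (v := n - a * Complex.I)
    (by simpa using hn) (by simpa using hn)
  rw [intervalIntegrable_iff_integrableOn_Ioo_of_le zero_le_one, ← Real.range_sigmoid,
    ← Set.image_univ, integrableOn_image_iff_integrableOn_abs_deriv_smul MeasurableSet.univ hd hi,
    integrableOn_univ] at hb
  simp_rw [logd_cpow] at hb
  refine ⟨hb, ?_⟩
  rw [Complex.betaIntegral, intervalIntegral.integral_of_le zero_le_one,
    integral_Ioc_eq_integral_Ioo, ← Real.range_sigmoid, ← Set.image_univ,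
    integral_image_eq_integral_abs_deriv_smul MeasurableSet.univ hd hi]
  simp_rw [logd_cpow]
  simp

lemma gamma_one (a : ℝ) (ha : 0 < a) :
    Complex.Gamma (1 + a * Complex.I) * Complex.Gamma (1 - a * Complex.I) =
      ((Real.pi * a / Real.sinh (Real.pi * a) : ℝ) : ℂ) := by
  have hz : (a : ℂ) * Complex.I ≠ 0 :=
    mul_ne_zero (by exact_mod_cast ha.ne') Complex.I_ne_zero
  rw [add_comm (1 : ℂ), Complex.Gamma_add_one _ hz, mul_assoc, Complex.Gamma_mul_Gamma_one_sub,
    ← mul_assoc, Complex.sin_mul_I]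
  have hs : 0 < Real.sinh (Real.pi * a) := Real.sinh_pos_iff.2 (by positivity)
  have hs' : Complex.sinh ((Real.pi : ℂ) * a) ≠ 0 := by
    exact_mod_cast hs.ne'
  push_cast
  have := Complex.I_ne_zero
  field_simp

lemma beta_two (a : ℝ) (ha : 0 < a) :
    Complex.betaIntegral ((2 : ℕ) + a * Complex.I) ((2 : ℕ) - a * Complex.I) =
      (((1 + a ^ 2) / 6 * (Real.pi * a / Real.sinh (Real.pi * a)) : ℝ) : ℂ) := by
  have h := Complex.Gamma_mul_Gamma_eq_betaIntegral (s := (2 : ℕ) + a * Complex.I)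
    (t := (2 : ℕ) - a * Complex.I) (by simp) (by simp)
  have e1 : ((2 : ℕ) : ℂ) + a * Complex.I = (1 + a * Complex.I) + 1 := by push_cast; ring
  have e2 : ((2 : ℕ) : ℂ) - a * Complex.I = (1 - a * Complex.I) + 1 := by push_cast; ring
  have n1 : (1 : ℂ) + a * Complex.I ≠ 0 := fun h => by simpa using congrArg Complex.re h
  have n2 : (1 : ℂ) - a * Complex.I ≠ 0 := fun h => by simpa using congrArg Complex.re h
  have e3 : ((2 : ℕ) : ℂ) + a * Complex.I + ((2 : ℕ) - a * Complex.I) = ((3 : ℕ) : ℂ) + 1 := by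
    push_cast; ring
  rw [e3, Complex.Gamma_nat_eq_factorial] at h
  have h2 : Complex.Gamma ((2 : ℕ) + a * Complex.I) * Complex.Gamma ((2 : ℕ) - a * Complex.I) =
      (1 + a * Complex.I) * (1 - a * Complex.I) *
      ((Real.pi * a / Real.sinh (Real.pi * a) : ℝ) : ℂ) := by
    rw [e1, e2, Complex.Gamma_add_one _ n1, Complex.Gamma_add_one _ n2, ← gamma_one a ha]
    ring
  rw [h2] at h
  have h3 : (1 + a * Complex.I) * (1 - a * Complex.I) = (1 + a ^ 2 : ℂ) := by
    linear_combination (-(a : ℂ) ^ 2) * Complex.I_sq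
  rw [h3] at h
  have h6 : ((Nat.factorial 3 : ℕ) : ℂ) = 6 := by norm_num [Nat.factorial]
  rw [h6] at h
  push_cast at h ⊢
  linear_combination (-1 / 6 : ℂ) * h

lemma beta_three (a : ℝ) (ha : 0 < a) :
    Complex.betaIntegral ((3 : ℕ) + a * Complex.I) ((3 : ℕ) - a * Complex.I) =
      (((4 + a ^ 2) * (1 + a ^ 2) / 120 * (Real.pi * a / Real.sinh (Real.pi * a)) : ℝ) : ℂ) := by
  have h := Complex.Gamma_mul_Gamma_eq_betaIntegral (s := (3 : ℕ) + a * Complex.I)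
    (t := (3 : ℕ) - a * Complex.I) (by simp) (by simp)
  have e1 : ((3 : ℕ) : ℂ) + a * Complex.I = (1 + a * Complex.I) + 1 + 1 := by push_cast; ring
  have e2 : ((3 : ℕ) : ℂ) - a * Complex.I = (1 - a * Complex.I) + 1 + 1 := by push_cast; ring
  have n1 : (1 : ℂ) + a * Complex.I ≠ 0 := fun h => by simpa using congrArg Complex.re h
  have n2 : (1 : ℂ) - a * Complex.I ≠ 0 := fun h => by simpa using congrArg Complex.re h
  have n3 : (1 : ℂ) + a * Complex.I + 1 ≠ 0 := fun h => by
    have := congrArg Complex.re h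
    norm_num at this
  have n4 : (1 : ℂ) - a * Complex.I + 1 ≠ 0 := fun h => by
    have := congrArg Complex.re h
    norm_num at this
  have e3 : ((3 : ℕ) : ℂ) + a * Complex.I + ((3 : ℕ) - a * Complex.I) = ((5 : ℕ) : ℂ) + 1 := by
    push_cast; ring
  rw [e3, Complex.Gamma_nat_eq_factorial] at h
  have h2 : Complex.Gamma ((3 : ℕ) + a * Complex.I) * Complex.Gamma ((3 : ℕ) - a * Complex.I) =
      ((2 + a * Complex.I) * (2 - a * Complex.I)) * ((1 + a * Complex.I) * (1 - a * Complex.I)) *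
      ((Real.pi * a / Real.sinh (Real.pi * a) : ℝ) : ℂ) := by
    rw [e1, e2, Complex.Gamma_add_one _ n3, Complex.Gamma_add_one _ n4,
      Complex.Gamma_add_one _ n1, Complex.Gamma_add_one _ n2, ← gamma_one a ha]
    ring
  rw [h2] at h
  have h3 : (1 + a * Complex.I) * (1 - a * Complex.I) = (1 + a ^ 2 : ℂ) := by
    linear_combination (-(a : ℂ) ^ 2) * Complex.I_sq
  have h4 : (2 + a * Complex.I) * (2 - a * Complex.I) = (4 + a ^ 2 : ℂ) := by
    linear_combination (-(a : ℂ) ^ 2) * Complex.I_sq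
  rw [h3, h4] at h
  have h6 : ((Nat.factorial 5 : ℕ) : ℂ) = 120 := by norm_num [Nat.factorial]
  rw [h6] at h
  push_cast at h ⊢
  linear_combination (-1 / 120 : ℂ) * h

lemma logd_integrable : Integrable logd := by
  have h := (logd_integral 1 one_pos 0).1.re
  simpa using h

/-- the key Fourier transform -/
lemma key_fourier (a : ℝ) (ha : 0 < a) :
    Integrable (fun s : ℝ => ((18 * logd s ^ 2 - 72 * logd s ^ 3 : ℝ) : ℂ) *
      Complex.exp (a * s * Complex.I)) ∧
    ∫ s : ℝ, ((18 * logd s ^ 2 - 72 * logd s ^ 3 : ℝ) : ℂ) * Complex.exp (a * s * Complex.I) =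
      ((3 / 5 * (1 - a ^ 4) * (Real.pi * a / Real.sinh (Real.pi * a)) : ℝ) : ℂ) := by
  obtain ⟨i2, h2⟩ := logd_integral 2 (by norm_num) a
  obtain ⟨i3, h3⟩ := logd_integral 3 (by norm_num) a
  have he : (fun s : ℝ => ((18 * logd s ^ 2 - 72 * logd s ^ 3 : ℝ) : ℂ) *
      Complex.exp (a * s * Complex.I)) = fun s : ℝ =>
      18 * (((logd s ^ 2 : ℝ) : ℂ) * Complex.exp (a * s * Complex.I)) -
      72 * (((logd s ^ 3 : ℝ) : ℂ) * Complex.exp (a * s * Complex.I)) := by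
    funext s
    push_cast
    ring
  rw [he]
  refine ⟨(i2.const_mul 18).sub (i3.const_mul 72), ?_⟩
  rw [integral_sub (i2.const_mul 18) (i3.const_mul 72), integral_const_mul, integral_const_mul,
    h2, h3, beta_two a ha, beta_three a ha]
  push_cast
  ring

lemma key_cos (r ω t₀ : ℝ) (hr : 0 < r) (hω : 0 < ω) :
    ∫ t : ℝ, Real.cos (ω * (t + t₀)) * (18 * logd (r * t) ^ 2 - 72 * logd (r * t) ^ 3) =
      Real.cos (ω * t₀) * (r⁻¹ * (3 / 5 * (1 - (ω / r) ^ 4) *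
        (Real.pi * (ω / r) / Real.sinh (Real.pi * (ω / r))))) := by
  obtain ⟨hi, hk⟩ := key_fourier (ω / r) (by positivity)
  have hi' := hi.comp_mul_left' hr.ne'
  have hs := Measure.integral_comp_mul_left (fun s : ℝ =>
    ((18 * logd s ^ 2 - 72 * logd s ^ 3 : ℝ) : ℂ) *
      Complex.exp ((ω / r : ℝ) * s * Complex.I)) r
  rw [hk, abs_of_pos (inv_pos.2 hr)] at hs
  have hm := hi'.const_mul (Complex.exp (((ω * t₀ : ℝ) : ℂ) * Complex.I))
  have hre := integral_re hm
  rw [integral_const_mul, hs] at hre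
  have e1 : ∀ t : ℝ, Real.cos (ω * (t + t₀)) *
      (18 * logd (r * t) ^ 2 - 72 * logd (r * t) ^ 3) =
      RCLike.re (Complex.exp (((ω * t₀ : ℝ) : ℂ) * Complex.I) *
        (((18 * logd (r * t) ^ 2 - 72 * logd (r * t) ^ 3 : ℝ) : ℂ) *
          Complex.exp ((ω / r : ℝ) * ((r * t : ℝ) : ℂ) * Complex.I))) := by
    intro t
    have : Complex.exp (((ω * t₀ : ℝ) : ℂ) * Complex.I) *
        (((18 * logd (r * t) ^ 2 - 72 * logd (r * t) ^ 3 : ℝ) : ℂ) *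
          Complex.exp ((ω / r : ℝ) * ((r * t : ℝ) : ℂ) * Complex.I)) =
        ((18 * logd (r * t) ^ 2 - 72 * logd (r * t) ^ 3 : ℝ) : ℂ) *
          Complex.exp (((ω * (t + t₀) : ℝ) : ℂ) * Complex.I) := by
      rw [mul_left_comm, ← Complex.exp_add]
      congr 2
      have hr' : (r : ℂ) ≠ 0 := by exact_mod_cast hr.ne'
      push_cast
      field_simp
      ring
    rw [this]
    change _ = Complex.re _
    rw [Complex.re_ofReal_mul, Complex.exp_ofReal_mul_I_re]
    ring
  rw [integral_congr_ae (Filter.Eventually.of_forall e1)]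
  refine hre.trans ?_
  change Complex.re _ = _
  rw [Complex.real_smul, ← Complex.ofReal_mul, Complex.re_mul_ofReal,
    Complex.exp_ofReal_mul_I_re]

/-- For every δ > 0, ω > 0 and t₀ ∈ ℝ, the function
`t ↦ sin(ω(t+t₀))·(x_h(t) − x_h(t)²)·x_h'(t)` is integrable on ℝ and
`∫ ... dt = (3π/5)·ω²·(δ² − ω⁴)·cos(ω t₀)/(δ³·sinh(πω/√δ))`. -/
theorem helmholtz_restoring_modulation_integral (δ ω : ℝ) (hδ : 0 < δ) (hω : 0 < ω)
    (t₀ : ℝ) (x : ℝ → ℝ)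
    (hx : ∀ t : ℝ, x t = 1 - 3 / (1 + Real.cosh (Real.sqrt δ * t))) :
    Integrable (fun t : ℝ => Real.sin (ω * (t + t₀)) * (x t - (x t) ^ 2) * deriv x t) ∧
    ∫ t : ℝ, Real.sin (ω * (t + t₀)) * (x t - (x t) ^ 2) * deriv x t =
      (3 * Real.pi / 5) * ω ^ 2 * (δ ^ 2 - ω ^ 4) * Real.cos (ω * t₀) /
        (δ ^ 3 * Real.sinh (Real.pi * ω / Real.sqrt δ)) := by
  obtain ⟨r, hrdef⟩ : ∃ r, r = Real.sqrt δ := ⟨_, rfl⟩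
  have hr : 0 < r := hrdef ▸ Real.sqrt_pos.2 hδ
  have hδr : δ = r ^ 2 := by rw [hrdef, Real.sq_sqrt hδ.le]
  rw [← hrdef] at hx ⊢
  have hxf : x = fun t => 1 - 6 * logd (r * t) := by
    funext t
    rw [hx, logd_eq]
  have hlin : ∀ t : ℝ, HasDerivAt (fun t : ℝ => r * t) r t := fun t => by
    simpa using (hasDerivAt_id t).const_mul r
  have hld : ∀ t : ℝ, HasDerivAt (fun t => logd (r * t))
      (logd (r * t) * (1 - 2 * Real.sigmoid (r * t)) * r) t := fun t =>
    (logd_hasDerivAt (r * t)).comp t (hlin t)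
  have hxd : ∀ t, deriv x t = -(6 * (logd (r * t) * (1 - 2 * Real.sigmoid (r * t)) * r)) := by
    intro t
    rw [hxf]
    exact (((hld t).const_mul 6).const_sub 1).deriv
  let u : ℝ → ℝ := fun t => Real.sin (ω * (t + t₀))
  let u' : ℝ → ℝ := fun t => ω * Real.cos (ω * (t + t₀))
  let v : ℝ → ℝ := fun t => -(18 * logd (r * t) ^ 2 - 72 * logd (r * t) ^ 3)
  let v' : ℝ → ℝ := fun t => -((36 * logd (r * t) - 216 * logd (r * t) ^ 2) *
    (logd (r * t) * (1 - 2 * Real.sigmoid (r * t)) * r))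
  have hfun : (fun t : ℝ => Real.sin (ω * (t + t₀)) * (x t - (x t) ^ 2) * deriv x t) = u * v' := by
    funext t
    rw [hxd, hxf]
    simp only [u, v', Pi.mul_apply]
    ring
  have hu : ∀ t, HasDerivAt u (u' t) t := by
    intro t
    have := (((hasDerivAt_id t).add_const t₀).const_mul ω).sin
    refine this.congr_deriv ?_
    simp [u', mul_comm]
  have hv : ∀ t, HasDerivAt v (v' t) t := by
    intro t
    have := ((((hld t).pow 2).const_mul 18).sub (((hld t).pow 3).const_mul 72)).neg
    refine this.congr_deriv ?_
    simp only [v']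
    push_cast
    ring
  have hL : Integrable (fun t => logd (r * t)) := logd_integrable.comp_mul_left' hr.ne'
  have cl : Continuous (fun t => logd (r * t)) := logd_cont.comp (by fun_prop)
  have cs : Continuous (fun t => Real.sigmoid (r * t)) := continuous_sigmoid.comp (by fun_prop)
  have cu : Continuous u := by simp only [u]; fun_prop
  have cu' : Continuous u' := by simp only [u']; fun_prop
  have iv : Integrable v := by
    have : v = fun t => (-(18 * logd (r * t) - 72 * logd (r * t) ^ 2)) * logd (r * t) := by
      funext t; simp only [v]; ring
    rw [this]
    refine hL.bdd_mul (c := 90) (by fun_prop) (Filter.Eventually.of_forall fun t => ?_)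
    have h1 := logd_pos (r * t)
    have h2 := logd_le (r * t)
    rw [Real.norm_eq_abs, abs_le]
    constructor <;> nlinarith
  have iv' : Integrable v' := by
    have : v' = fun t => (-((36 * logd (r * t) - 216 * logd (r * t) ^ 2) *
        ((1 - 2 * Real.sigmoid (r * t)) * r))) * logd (r * t) := by
      funext t; simp only [v']; ring
    rw [this]
    refine hL.bdd_mul (c := 252 * (1 * r)) (by fun_prop) (Filter.Eventually.of_forall fun t => ?_)
    have h1 := logd_pos (r * t)
    have h2 := logd_le (r * t)
    have h3 := Real.sigmoid_pos (r * t)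
    have h4 := Real.sigmoid_lt_one (r * t)
    rw [norm_neg, norm_mul, norm_mul, Real.norm_eq_abs, Real.norm_eq_abs, Real.norm_eq_abs,
      abs_of_pos hr]
    gcongr
    · rw [abs_le]
      constructor <;> nlinarith
    · rw [abs_le]
      constructor <;> linarith
  have iuv' : Integrable (u * v') :=
    iv'.bdd_mul (c := 1) cu.aestronglyMeasurable
      (Filter.Eventually.of_forall fun t => Real.abs_sin_le_one _)
  have iuv : Integrable (u * v) :=
    iv.bdd_mul (c := 1) cu.aestronglyMeasurable
      (Filter.Eventually.of_forall fun t => Real.abs_sin_le_one _)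
  have iu'v : Integrable (u' * v) :=
    iv.bdd_mul (c := ω) cu'.aestronglyMeasurable
      (Filter.Eventually.of_forall fun t => by
        simp only [u']
        rw [norm_mul, Real.norm_eq_abs, Real.norm_eq_abs, abs_of_pos hω]
        nlinarith [Real.abs_cos_le_one (ω * (t + t₀))])
  rw [hfun]
  refine ⟨iuv', ?_⟩
  have hibp := integral_mul_deriv_eq_deriv_mul_of_integrable (fun t _ => hu t) (fun t _ => hv t)
    iuv' iu'v iuv
  refine hibp.trans ?_
  have e : ∀ t, u' t * v t = (-ω) * (Real.cos (ω * (t + t₀)) *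
      (18 * logd (r * t) ^ 2 - 72 * logd (r * t) ^ 3)) := by
    intro t; simp only [u', v]; ring
  rw [integral_congr_ae (Filter.Eventually.of_forall e), integral_const_mul,
    key_cos r ω t₀ hr hω, hδr, mul_div_assoc]
  have hs : 0 < Real.sinh (Real.pi * (ω / r)) :=
    Real.sinh_pos_iff.2 (mul_pos Real.pi_pos (div_pos hω hr))
  rw [mul_div_assoc Real.pi ω r]
  generalize Real.sinh (Real.pi * (ω / r)) = S at hs ⊢
  field_simp
end
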